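/- (Lemma B.2: concentration of the conditional mean Ĉ.) For any 0 < λ_{(1)} < 3 √(ν c_a n), P_(1)[ Ĉ − δ_K > 4 λ_{(1)} √(ν/(c_a n)) ] ≤ 4 e^{−λ_{(1)}²/4}, and likewise P_(1)[ Ĉ − δ_K < −4 λ_{(1)} √(ν/(c_a n)) ] ≤ 4 e^{−λ_{(1)}²/4}. -/

import Mathlib

open MeasureTheory Real
open scoped BigOperators ENNReal

/-- The exact NTK witness function `ĝ_NTK` built from the training sample
`dtr = (X₍₁₎, Y₍₁₎)`. -/
noncomputable def ntkWitness {𝒳 : Type*} (K : 𝒳 → 𝒳 → ℝ) (n1X n1Y : ℕ)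
    (dtr : (Fin n1X → 𝒳) × (Fin n1Y → 𝒳)) (x : 𝒳) : ℝ :=
  (1/(n1X:ℝ)) * ∑ j, K x (dtr.1 j) - (1/(n1Y:ℝ)) * ∑ j, K x (dtr.2 j)

/-- The conditional mean `Ĉ = ∫ ĝ_NTK d(p−q) = ∫ ĝ_NTK dp − ∫ ĝ_NTK dq`. -/
noncomputable def condMeanC {𝒳 : Type*} [MeasurableSpace 𝒳] (K : 𝒳 → 𝒳 → ℝ)
    (n1X n1Y : ℕ) (p q : Measure 𝒳)
    (dtr : (Fin n1X → 𝒳) × (Fin n1Y → 𝒳)) : ℝ :=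
  (∫ x, ntkWitness K n1X n1Y dtr x ∂p) - ∫ x, ntkWitness K n1X n1Y dtr x ∂q

/-- The squared population MMD `δ_K = ∬ K d(p−q)d(p−q)`, written out as
`∬K dp dp − 2∬K dp dq + ∬K dq dq`. -/
noncomputable def deltaK {𝒳 : Type*} [MeasurableSpace 𝒳] (K : 𝒳 → 𝒳 → ℝ)
    (p q : Measure 𝒳) : ℝ :=
  (∫ x, ∫ y, K x y ∂p ∂p) - 2 * (∫ x, ∫ y, K x y ∂q ∂p) + (∫ x, ∫ y, K x y ∂q ∂q)

lemma aux_int {α : Type*} [MeasurableSpace α] (μ : Measure α) [IsFiniteMeasure μ]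
    {f : α → ℝ} (hf : Measurable f) {C : ℝ} (hb : ∀ x, |f x| ≤ C) : Integrable f μ :=
  Integrable.of_bound hf.aestronglyMeasurable C (Filter.Eventually.of_forall hb)

lemma aux_mgf {α : Type*} [MeasurableSpace α] (μ : Measure α) [IsProbabilityMeasure μ]
    (f : α → ℝ) (hf : Measurable f) (hb : ∀ x, |f x| ≤ 2) (ν : ℝ)
    (hv : ∫ x, f x ^ 2 ∂μ ≤ 4 * ν) (c : ℝ) (hc : |c| * 2 ≤ 1) :
    ∫ x, exp (c * f x) ∂μ ≤ exp (c * ∫ x, f x ∂μ + 4 * ν * c ^ 2) := by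
  have h1 : ∀ x, exp (c * f x) ≤ 1 + c * f x + c ^ 2 * f x ^ 2 := by
    intro x
    have h : |c * f x| ≤ 1 := by
      rw [abs_mul]
      exact (mul_le_mul_of_nonneg_left (hb x) (abs_nonneg c)).trans hc
    have := le_of_abs_le (Real.abs_exp_sub_one_sub_id_le h)
    nlinarith
  have i1 := aux_int μ hf hb
  have i2 : Integrable (fun x => f x ^ 2) μ := aux_int μ (hf.pow_const 2) (C := 4) (by
    intro x
    rw [abs_pow]
    nlinarith [hb x, abs_nonneg (f x)])
  have i3 : Integrable (fun x => 1 + c * f x + c ^ 2 * f x ^ 2) μ :=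
    ((integrable_const 1).add (i1.const_mul c)).add (i2.const_mul _)
  calc ∫ x, exp (c * f x) ∂μ ≤ ∫ x, (1 + c * f x + c ^ 2 * f x ^ 2) ∂μ :=
        integral_mono_of_nonneg (Filter.Eventually.of_forall fun x => (exp_pos _).le) i3
          (Filter.Eventually.of_forall h1)
    _ = 1 + c * ∫ x, f x ∂μ + c ^ 2 * ∫ x, f x ^ 2 ∂μ := by
        rw [integral_add (by exact (integrable_const 1).add (i1.const_mul c)) (i2.const_mul _),
          integral_add (integrable_const 1) (i1.const_mul c), integral_const_mul,
          integral_const_mul]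
        simp
    _ ≤ (c * ∫ x, f x ∂μ + 4 * ν * c ^ 2) + 1 := by nlinarith [sq_nonneg c]
    _ ≤ _ := add_one_le_exp _

lemma aux_pi {α : Type*} [MeasurableSpace α] (μ : Measure α) [IsProbabilityMeasure μ]
    (f : α → ℝ) (hf : Measurable f) (hb : ∀ x, |f x| ≤ 2) (ν N : ℝ) (hν : 0 < ν) (hN : 0 < N)
    (m : ℕ) (hm : N ≤ m)
    (hv : ∫ x, f x ^ 2 ∂μ ≤ 4 * ν) (s : ℝ) (hs : |s| * 2 ≤ N) :
    ∫ x, exp (s * ((1 / (m : ℝ)) * ∑ j, f (x j))) ∂(Measure.pi fun _ : Fin m => μ)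
      ≤ exp (s * ∫ x, f x ∂μ + 4 * ν * s ^ 2 / N) := by
  have hm0 : (0 : ℝ) < m := hN.trans_le hm
  have e : ∀ x : Fin m → α, exp (s * ((1 / (m : ℝ)) * ∑ j, f (x j)))
      = ∏ j, exp (s / m * f (x j)) := by
    intro x
    rw [← exp_sum, ← Finset.mul_sum]
    congr 1; ring
  simp_rw [e]
  rw [integral_fintype_prod_eq_prod (fun (_ : Fin m) y => exp (s / m * f y))]
  rw [Finset.prod_const, Finset.card_univ, Fintype.card_fin]
  have h := aux_mgf μ f hf hb ν hv (s / m) (by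
    rw [abs_div, abs_of_pos hm0, div_mul_eq_mul_div, div_le_one hm0]; linarith)
  calc _ ≤ exp (s / m * ∫ x, f x ∂μ + 4 * ν * (s / m) ^ 2) ^ m :=
        pow_le_pow_left₀ (integral_nonneg fun x => (exp_pos _).le) h m
    _ = exp (s * ∫ x, f x ∂μ + 4 * ν * s ^ 2 / m) := by
        rw [← exp_nat_mul]; congr 1; field_simp
    _ ≤ _ := by
        apply exp_le_exp.mpr
        gcongr

lemma aux_tail {α : Type*} [MeasurableSpace α] (p q : Measure α) [IsProbabilityMeasure p]
    [IsProbabilityMeasure q]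
    (f : α → ℝ) (hf : Measurable f) (hb : ∀ x, |f x| ≤ 2) (ν N : ℝ) (hν : 0 < ν) (hN : 0 < N)
    (a b : ℕ) (ha : N ≤ a) (hb' : N ≤ b)
    (hp : ∫ x, f x ^ 2 ∂p ≤ 4 * ν) (hq : ∫ x, f x ^ 2 ∂q ≤ 4 * ν)
    (l : ℝ) (hl : 0 < l) (hl' : l < 3 * sqrt (ν * N)) :
    ((Measure.pi fun _ : Fin a => p).prod (Measure.pi fun _ : Fin b => q))
      {d | ((1 / (a : ℝ)) * ∑ j, f (d.1 j) - (1 / (b : ℝ)) * ∑ j, f (d.2 j))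
        - (∫ x, f x ∂p - ∫ x, f x ∂q) > 4 * l * sqrt (ν / N)}
      ≤ ENNReal.ofReal (4 * exp (-l ^ 2 / 4)) := by
  set P := (Measure.pi fun _ : Fin a => p).prod (Measure.pi fun _ : Fin b => q) with hP
  set r := sqrt (ν * N) with hr
  have hr0 : 0 < r := sqrt_pos.mpr (by positivity)
  have hr2 : r ^ 2 = ν * N := sq_sqrt (by positivity)
  have hT : sqrt (ν / N) = r / N := by
    rw [show ν / N = (ν * N) / N ^ 2 by field_simp, sqrt_div (by positivity), sqrt_sq hN.le]
  set s := l * N / (6 * r) with hs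
  have hs0 : 0 < s := by positivity
  have hs1 : s * 2 ≤ N := by
    rw [hs, div_mul_eq_mul_div, div_le_iff₀ (by positivity)]
    nlinarith
  set D := ∫ x, f x ∂p - ∫ x, f x ∂q with hD
  set X : (Fin a → α) × (Fin b → α) → ℝ := fun d =>
    (1 / (a : ℝ)) * ∑ j, f (d.1 j) - (1 / (b : ℝ)) * ∑ j, f (d.2 j) with hX
  have ha0 : (0 : ℝ) < a := hN.trans_le ha
  have hb0 : (0 : ℝ) < b := hN.trans_le hb'
  have hav : ∀ (m : ℕ), (0 : ℝ) < m → ∀ x : Fin m → α,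
      |(1 / (m : ℝ)) * ∑ j, f (x j)| ≤ 2 := by
    intro m hm x
    rw [abs_mul, abs_of_pos (by positivity : (0 : ℝ) < 1 / m), one_div,
      inv_mul_le_iff₀ hm]
    calc _ ≤ ∑ j, |f (x j)| := Finset.abs_sum_le_sum_abs _ _
      _ ≤ ∑ j : Fin m, 2 := Finset.sum_le_sum fun j _ => hb _
      _ = _ := by simp
  have hXm : Measurable X := by
    rw [hX]; fun_prop
  have hXi : Integrable (fun d => exp (s * X d)) P := by
    refine aux_int P (by fun_prop) (C := exp (s * 4)) ?_
    intro d
    rw [abs_of_pos (exp_pos _)]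
    apply exp_le_exp.mpr
    apply mul_le_mul_of_nonneg_left _ hs0.le
    have h1 := abs_le.mp (hav a ha0 d.1)
    have h2 := abs_le.mp (hav b hb0 d.2)
    simp only [hX]; linarith
  have key := ProbabilityTheory.measure_ge_le_exp_mul_mgf (μ := P) (X := X)
    (4 * l * sqrt (ν / N) + D) hs0.le hXi
  have hm : ProbabilityTheory.mgf X P s ≤ exp (s * D + 8 * ν * s ^ 2 / N) := by
    unfold ProbabilityTheory.mgf
    have e : ∀ d : (Fin a → α) × (Fin b → α), exp (s * X d)
      = exp (s * ((1 / (a : ℝ)) * ∑ j, f (d.1 j)))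
        * exp ((-s) * ((1 / (b : ℝ)) * ∑ j, f (d.2 j))) := by
      intro d; rw [← exp_add]; congr 1; simp only [hX]; ring
    simp_rw [e]
    rw [hP, integral_prod_mul (fun x : Fin a → α => exp (s * ((1 / (a : ℝ)) * ∑ j, f (x j))))
      (fun x : Fin b → α => exp ((-s) * ((1 / (b : ℝ)) * ∑ j, f (x j))))]
    have h1 := aux_pi p f hf hb ν N hν hN a ha hp s (by rwa [abs_of_pos hs0])
    have h2 := aux_pi q f hf hb ν N hν hN b hb' hq (-s) (by rwa [abs_neg, abs_of_pos hs0])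
    calc _ ≤ _ := mul_le_mul h1 h2 (integral_nonneg fun x => (exp_pos _).le) (exp_pos _).le
      _ = _ := by rw [← exp_add]; congr 1; rw [hD]; ring
  have fin : P.real {d | 4 * l * sqrt (ν / N) + D ≤ X d} ≤ 4 * exp (-l ^ 2 / 4) := by
    calc _ ≤ _ := key
      _ ≤ exp (-s * (4 * l * sqrt (ν / N) + D)) * exp (s * D + 8 * ν * s ^ 2 / N) :=
        mul_le_mul_of_nonneg_left hm (exp_pos _).le
      _ = exp (-(4 / 9) * l ^ 2) := by
        rw [← exp_add]; congr 1
        have e1 : s * sqrt (ν / N) = l / 6 := by rw [hT, hs]; field_simp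
        have e2 : ν * s ^ 2 / N = l ^ 2 / 36 := by
          have : ν = r ^ 2 / N := by rw [hr2]; field_simp
          rw [this, hs]; field_simp; norm_num
        linear_combination (-4 * l) * e1 + 8 * e2
      _ ≤ exp (-l ^ 2 / 4) := by
        apply exp_le_exp.mpr; nlinarith [sq_nonneg l]
      _ ≤ _ := by linarith [exp_pos (-l ^ 2 / 4)]
  calc _ ≤ P {d | 4 * l * sqrt (ν / N) + D ≤ X d} := by
        apply measure_mono
        intro d hd
        simp only [Set.mem_ofPred_eq] at hd ⊢
        simp only [hX]; linarith
    _ = ENNReal.ofReal (P.real {d | 4 * l * sqrt (ν / N) + D ≤ X d}) := by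
        rw [ofReal_measureReal]
    _ ≤ _ := ENNReal.ofReal_le_ofReal fin

lemma aux_sq {α : Type*} [MeasurableSpace α] (p : Measure α) [IsProbabilityMeasure p]
    (f : α → ℝ) (hf : Measurable f) (hb : ∀ x, |f x| ≤ 1) :
    (∫ x, f x ∂p) ^ 2 ≤ ∫ x, f x ^ 2 ∂p := by
  have i1 := aux_int p hf hb
  have i2 : Integrable (fun x => f x ^ 2) p := aux_int p (hf.pow_const 2) (C := 1) (by
    intro x
    rw [abs_pow]
    nlinarith [hb x, abs_nonneg (f x)])
  set m := ∫ x, f x ∂p with hm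
  have h : 0 ≤ ∫ x, (f x ^ 2 - 2 * m * f x + m ^ 2) ∂p :=
    integral_nonneg fun x => by
      show 0 ≤ f x ^ 2 - 2 * m * f x + m ^ 2
      nlinarith [sq_nonneg (f x - m)]
  rw [integral_add (by exact i2.sub (i1.const_mul _)) (integrable_const _),
    integral_sub i2 (i1.const_mul _), integral_const_mul, ← hm] at h
  simp at h
  nlinarith


lemma aux_emb_meas {α : Type*} [MeasurableSpace α] (K : α → α → ℝ)
    (hK : Measurable (Function.uncurry K)) (p : Measure α) [IsProbabilityMeasure p] :
    Measurable fun y => ∫ x, K y x ∂p :=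
  (hK.stronglyMeasurable.integral_prod_right (ν := p)).measurable

lemma aux_emb_bdd {α : Type*} [MeasurableSpace α] (K : α → α → ℝ)
    (hb : ∀ x y, |K x y| ≤ 1)
    (p : Measure α) [IsProbabilityMeasure p] (y : α) :
    |∫ x, K y x ∂p| ≤ 1 := by
  have := norm_integral_le_of_norm_le_const (μ := p) (f := fun x => K y x) (C := 1)
    (Filter.Eventually.of_forall (hb y))
  simpa using this

lemma aux_emb_sq {α : Type*} [MeasurableSpace α] (K : α → α → ℝ)
    (hK : Measurable (Function.uncurry K)) (hb : ∀ x y, |K x y| ≤ 1)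
    (p q : Measure α) [IsProbabilityMeasure p] [IsProbabilityMeasure q] :
    ∫ y, (∫ x, K y x ∂p) ^ 2 ∂q ≤ ∫ y, ∫ x, K y x ^ 2 ∂p ∂q := by
  have hm : Measurable fun y => ∫ x, K y x ^ 2 ∂p :=
    ((hK.pow_const 2).stronglyMeasurable.integral_prod_right (ν := p)).measurable
  refine integral_mono_of_nonneg (Filter.Eventually.of_forall fun y => sq_nonneg _)
    (aux_int q hm (C := 1) ?_) (Filter.Eventually.of_forall fun y => ?_)
  · exact aux_emb_bdd (fun y x => K y x ^ 2) (fun y x => by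
      rw [abs_pow]; nlinarith [hb y x, abs_nonneg (K y x)]) p
  · exact aux_sq p _ (hK.comp measurable_prodMk_left) (hb y)

lemma aux_h_sq {α : Type*} [MeasurableSpace α] (K : α → α → ℝ)
    (hK : Measurable (Function.uncurry K)) (hb : ∀ x y, |K x y| ≤ 1)
    (p q m : Measure α) [IsProbabilityMeasure p] [IsProbabilityMeasure q]
    [IsProbabilityMeasure m] (ν : ℝ)
    (h1 : ∫ y, ∫ x, K y x ^ 2 ∂p ∂m ≤ ν) (h2 : ∫ y, ∫ x, K y x ^ 2 ∂q ∂m ≤ ν) :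
    ∫ y, (∫ x, K y x ∂p - ∫ x, K y x ∂q) ^ 2 ∂m ≤ 4 * ν := by
  have g1 := aux_emb_sq K hK hb p m
  have g2 := aux_emb_sq K hK hb q m
  have i : ∀ (r : Measure α) [IsProbabilityMeasure r],
      Integrable (fun y => (∫ x, K y x ∂r) ^ 2) m := by
    intro r _
    refine aux_int m ((aux_emb_meas K hK r).pow_const 2) (C := 1) fun y => ?_
    rw [abs_pow]
    nlinarith [aux_emb_bdd K hb r y, abs_nonneg (∫ x, K y x ∂r)]
  calc _ ≤ ∫ y, (2 * (∫ x, K y x ∂p) ^ 2 + 2 * (∫ x, K y x ∂q) ^ 2) ∂m := by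
        refine integral_mono_of_nonneg (Filter.Eventually.of_forall fun y => sq_nonneg _)
          (((i p).const_mul 2).add ((i q).const_mul 2)) (Filter.Eventually.of_forall fun y => ?_)
        show (∫ x, K y x ∂p - ∫ x, K y x ∂q) ^ 2 ≤ _
        nlinarith [sq_nonneg (∫ x, K y x ∂p + ∫ x, K y x ∂q)]
    _ = 2 * ∫ y, (∫ x, K y x ∂p) ^ 2 ∂m + 2 * ∫ y, (∫ x, K y x ∂q) ^ 2 ∂m := by
        rw [integral_add ((i p).const_mul 2) ((i q).const_mul 2), integral_const_mul,
          integral_const_mul]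
    _ ≤ _ := by linarith

lemma aux_swap {α : Type*} [MeasurableSpace α] (K : α → α → ℝ)
    (hK : Measurable (Function.uncurry K)) (hb : ∀ x y, |K x y| ≤ 1)
    (hs : ∀ x y, K x y = K y x)
    (p q : Measure α) [IsProbabilityMeasure p] [IsProbabilityMeasure q] :
    ∫ x, ∫ y, K x y ∂p ∂q = ∫ x, ∫ y, K x y ∂q ∂p := by
  rw [integral_integral_swap (aux_int (q.prod p) hK (C := 1) (fun z => hb z.1 z.2))]
  simp_rw [fun x y => hs y x]

lemma aux_cond {α : Type*} [MeasurableSpace α] (K : α → α → ℝ)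
    (hK : Measurable (Function.uncurry K)) (hb : ∀ x y, |K x y| ≤ 1)
    (hs : ∀ x y, K x y = K y x)
    (p q : Measure α) [IsProbabilityMeasure p] [IsProbabilityMeasure q] (a b : ℕ)
    (d : (Fin a → α) × (Fin b → α)) :
    condMeanC K a b p q d = (1 / (a : ℝ)) * ∑ j, (∫ x, K (d.1 j) x ∂p - ∫ x, K (d.1 j) x ∂q)
      - (1 / (b : ℝ)) * ∑ j, (∫ x, K (d.2 j) x ∂p - ∫ x, K (d.2 j) x ∂q) := by
  have w : ∀ (r : Measure α) [IsProbabilityMeasure r],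
      ∫ x, ntkWitness K a b d x ∂r = (1 / (a : ℝ)) * ∑ j, (∫ x, K (d.1 j) x ∂r)
        - (1 / (b : ℝ)) * ∑ j, (∫ x, K (d.2 j) x ∂r) := by
    intro r _
    have i : ∀ y, Integrable (fun x => K x y) r := fun y =>
      aux_int r (hK.comp measurable_prodMk_right) (fun x => hb x y)
    unfold ntkWitness
    rw [integral_sub ((integrable_finsetSum _ fun j _ => i _).const_mul _)
      ((integrable_finsetSum _ fun j _ => i _).const_mul _), integral_const_mul,
      integral_const_mul, integral_finsetSum _ (fun j _ => i _),
      integral_finsetSum _ (fun j _ => i _)]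
    simp_rw [fun x j => hs x (d.1 j), fun x j => hs x (d.2 j)]
  unfold condMeanC
  rw [w p, w q, Finset.sum_sub_distrib, Finset.sum_sub_distrib]
  ring

lemma aux_delta {α : Type*} [MeasurableSpace α] (K : α → α → ℝ)
    (hK : Measurable (Function.uncurry K)) (hb : ∀ x y, |K x y| ≤ 1)
    (hs : ∀ x y, K x y = K y x)
    (p q : Measure α) [IsProbabilityMeasure p] [IsProbabilityMeasure q] :
    deltaK K p q = ∫ y, (∫ x, K y x ∂p - ∫ x, K y x ∂q) ∂p
      - ∫ y, (∫ x, K y x ∂p - ∫ x, K y x ∂q) ∂q := by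
  have i : ∀ (r m : Measure α) [IsProbabilityMeasure r] [IsProbabilityMeasure m],
      Integrable (fun y => ∫ x, K y x ∂r) m := fun r m _ _ =>
    aux_int m (aux_emb_meas K hK r) (aux_emb_bdd K hb r)
  rw [integral_sub (i p p) (i q p), integral_sub (i p q) (i q q), aux_swap K hK hb hs p q]
  unfold deltaK
  ring

/-- Lemma B.2: concentration of the conditional mean `Ĉ` around `δ_K`: for
`0 < λ₍₁₎ < 3√(νc_a n)`, each of the deviations `Ĉ − δ_K > 4λ₍₁₎√(ν/(c_a n))` and
`Ĉ − δ_K < −4λ₍₁₎√(ν/(c_a n))` has `P₍₁₎`-probability at most `4e^{−λ₍₁₎²/4}`. -/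
theorem condMean_concentration
    {d : ℕ} (𝒳 : Set (EuclideanSpace ℝ (Fin d))) (h𝒳 : MeasurableSet 𝒳)
    (K : 𝒳 → 𝒳 → ℝ)
    (hKmeas : Measurable (Function.uncurry K))
    (hKsym : ∀ x y, K x y = K y x)
    (hKpsd : ∀ (m : ℕ) (z : Fin m → 𝒳) (a : Fin m → ℝ),
      0 ≤ ∑ i, ∑ j, a i * a j * K (z i) (z j))
    (hKbdd : ∀ x y, |K x y| ≤ 1)
    (p q : Measure 𝒳) [IsProbabilityMeasure p] [IsProbabilityMeasure q]
    (ν : ℝ) (hν1 : ν ≤ 1)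
    (hνpp : ∫ x, ∫ y, (K x y)^2 ∂p ∂p ≤ ν)
    (hνpq : ∫ x, ∫ y, (K x y)^2 ∂q ∂p ≤ ν)
    (hνqq : ∫ x, ∫ y, (K x y)^2 ∂q ∂q ≤ ν)
    (n1X n1Y n : ℕ) (ca : ℝ) (hca : 0 < ca) (hca1 : ca < 1)
    (hbal1 : ca * (n : ℝ) ≤ (n1X : ℝ)) (hbal1' : (n1X : ℝ) ≤ (n : ℝ))
    (hbal2 : ca * (n : ℝ) ≤ (n1Y : ℝ)) (hbal2' : (n1Y : ℝ) ≤ (n : ℝ))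
    (lam1 : ℝ) (hlam1 : 0 < lam1)
    (hlam1' : lam1 < 3 * Real.sqrt (ν * ca * (n : ℝ))) :
    ((Measure.pi fun _ : Fin n1X => p).prod (Measure.pi fun _ : Fin n1Y => q))
        {dtr : (Fin n1X → 𝒳) × (Fin n1Y → 𝒳) |
          condMeanC K n1X n1Y p q dtr - deltaK K p q
            > 4 * lam1 * Real.sqrt (ν/(ca * (n : ℝ)))}
      ≤ ENNReal.ofReal (4 * Real.exp (-lam1^2 / 4)) ∧
    ((Measure.pi fun _ : Fin n1X => p).prod (Measure.pi fun _ : Fin n1Y => q))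
        {dtr : (Fin n1X → 𝒳) × (Fin n1Y → 𝒳) |
          condMeanC K n1X n1Y p q dtr - deltaK K p q
            < -(4 * lam1 * Real.sqrt (ν/(ca * (n : ℝ))))}
      ≤ ENNReal.ofReal (4 * Real.exp (-lam1^2 / 4)) := by
  have hpos : 0 < ν * ca * (n : ℝ) := by
    by_contra h
    rw [sqrt_eq_zero_of_nonpos (not_lt.mp h)] at hlam1'
    linarith
  have hn : (0 : ℝ) < n := by
    rcases (Nat.cast_nonneg n : (0 : ℝ) ≤ n).eq_or_lt with h | h
    · rw [← h] at hpos; simp at hpos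
    · exact h
  have hN : 0 < ca * (n : ℝ) := mul_pos hca hn
  rw [mul_assoc] at hpos hlam1'
  have hν : 0 < ν := pos_of_mul_pos_left hpos hN.le
  set h : 𝒳 → ℝ := fun y => ∫ x, K y x ∂p - ∫ x, K y x ∂q with hh
  have hm : Measurable h := (aux_emb_meas K hKmeas p).sub (aux_emb_meas K hKmeas q)
  have hbd : ∀ y, |h y| ≤ 2 := fun y => by
    have h1 := abs_le.mp (aux_emb_bdd K hKbdd p y)
    have h2 := abs_le.mp (aux_emb_bdd K hKbdd q y)
    rw [abs_le]; simp only [hh]; constructor <;> linarith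
  have hνqp : ∫ x, ∫ y, (K x y)^2 ∂p ∂q ≤ ν := by
    rw [aux_swap (fun x y => K x y ^ 2) (hKmeas.pow_const 2) (fun x y => by
      rw [abs_pow]; nlinarith [hKbdd x y, abs_nonneg (K x y)])
      (fun x y => by rw [hKsym]) p q]
    exact hνpq
  have vp : ∫ y, h y ^ 2 ∂p ≤ 4 * ν := aux_h_sq K hKmeas hKbdd p q p ν hνpp hνpq
  have vq : ∫ y, h y ^ 2 ∂q ≤ 4 * ν := aux_h_sq K hKmeas hKbdd p q q ν hνqp hνqq
  have eC : ∀ d, condMeanC K n1X n1Y p q d - deltaK K p q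
      = ((1 / (n1X : ℝ)) * ∑ j, h (d.1 j) - (1 / (n1Y : ℝ)) * ∑ j, h (d.2 j))
        - (∫ x, h x ∂p - ∫ x, h x ∂q) := fun d => by
    rw [aux_cond K hKmeas hKbdd hKsym, aux_delta K hKmeas hKbdd hKsym]
  constructor
  · simp_rw [eC]
    exact aux_tail p q h hm hbd ν _ hν hN n1X n1Y hbal1 hbal2 vp vq lam1 hlam1 hlam1'
  · have t := aux_tail p q (fun x => -h x) hm.neg (fun x => by rw [abs_neg]; exact hbd x)
      ν _ hν hN n1X n1Y hbal1 hbal2 (by simpa using vp) (by simpa using vq) lam1 hlam1 hlam1'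
    refine (measure_mono ?_).trans t
    intro d hd
    simp only [Set.mem_ofPred_eq, eC] at hd
    simp only [Set.mem_ofPred_eq, Finset.sum_neg_distrib, integral_neg]
    linarith
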